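/- Sandwiching lemma: Let p ∈ (1,∞), let K ⊆ X be finite, let g ∈ C(K) with g ≥ 0, and let f ∈ C_c(X∖K) with f ≥ 0 such that λ₀(supp f ∪ K) > 0. Let u, v ∈ F(K) satisfy Hu ≤ g ≤ Hv on K, u ≤ f ≤ v on ∂K ∪ supp f, and 0 ≤ u ≤ v on K. Then there exists a function w ≥ 0 vanishing outside K ∪ supp f such that Hw = g on K, w = f on ∂K ∪ supp f, and u ≤ w ≤ v on K. Moreover, if K is connected and either g ≠ 0 on K, or supp f ∩ ∂K = {x₀} with f(x₀) > 0, then w is unique. -/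

import Mathlib

open scoped BigOperators

/-- `⟨a⟩_p := |a|^{p-1} · sgn(a)`. -/
noncomputable def pPow (p a : ℝ) : ℝ := |a| ^ (p - 1) * Real.sign a

/-- `C(V)`: real-valued functions on `X` vanishing outside `V`. -/
def MemC {X : Type*} (V : Set X) (f : X → ℝ) : Prop := ∀ x ∉ V, f x = 0

/-- `C_c(V)`: finitely supported functions with support contained in `V`. -/
def MemCc {X : Type*} (V : Set X) (f : X → ℝ) : Prop :=
  (Function.support f).Finite ∧ ∀ x ∉ V, f x = 0

/-- The formal space `F(V)`. -/
def MemF {X : Type*} (b : X → X → ℝ) (p : ℝ) (V : Set X) (f : X → ℝ) : Prop :=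
  ∀ x ∈ V, Summable fun y => b x y * |f y| ^ (p - 1)

/-- The domain `D` of the energy functional. -/
def MemD {X : Type*} (b : X → X → ℝ) (c : X → ℝ) (p : ℝ) (f : X → ℝ) : Prop :=
  (Summable fun z : X × X => b z.1 z.2 * |f z.1 - f z.2| ^ p) ∧
  (Summable fun x => |c x| * |f x| ^ p)

/-- The `p`-energy functional `h`. -/
noncomputable def energy {X : Type*} (b : X → X → ℝ) (c : X → ℝ) (p : ℝ) (f : X → ℝ) : ℝ :=
  (1 / 2) * ∑' z : X × X, b z.1 z.2 * |f z.1 - f z.2| ^ p + ∑' x, c x * |f x| ^ p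

/-- The `p`-Schrödinger operator `H`. -/
noncomputable def HOp {X : Type*} (m : X → ℝ) (b : X → X → ℝ) (c : X → ℝ) (p : ℝ)
    (f : X → ℝ) (x : X) : ℝ :=
  (1 / m x) * ∑' y, b x y * pPow p (f x - f y) + (c x / m x) * pPow p (f x)

/-- The `p`-Laplacian `L` (i.e. `H` with potential `0`). -/
noncomputable def LOp {X : Type*} (m : X → ℝ) (b : X → X → ℝ) (p : ℝ)
    (f : X → ℝ) (x : X) : ℝ :=
  (1 / m x) * ∑' y, b x y * pPow p (f x - f y)

/-- `(X, m, b)` is a weighted graph. -/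
def IsGraph {X : Type*} (m : X → ℝ) (b : X → X → ℝ) : Prop :=
  (∀ x, 0 < m x) ∧ (∀ x y, 0 ≤ b x y) ∧ (∀ x y, b x y = b y x) ∧
  (∀ x, b x x = 0) ∧ (∀ x, Summable fun y => b x y)

/-- A set `V` is connected w.r.t. the graph: any two of its vertices are joined by a
path of neighbours inside `V`. -/
def ConnectedIn {X : Type*} (b : X → X → ℝ) (V : Set X) : Prop :=
  ∀ x ∈ V, ∀ y ∈ V, Relation.ReflTransGen (fun u v => u ∈ V ∧ v ∈ V ∧ 0 < b u v) x y

/-- The (outer) boundary `∂V`. -/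
def bdry {X : Type*} (b : X → X → ℝ) (V : Set X) : Set X :=
  {y | y ∉ V ∧ ∃ z ∈ V, 0 < b y z}

/-- `u` is harmonic on `V` (w.r.t. `H`). -/
def HarmonicOn {X : Type*} (m : X → ℝ) (b : X → X → ℝ) (c : X → ℝ) (p : ℝ)
    (V : Set X) (u : X → ℝ) : Prop := ∀ x ∈ V, HOp m b c p u x = 0

/-- `u` is superharmonic on `V` (w.r.t. `H`). -/
def SuperharmonicOn {X : Type*} (m : X → ℝ) (b : X → X → ℝ) (c : X → ℝ) (p : ℝ)
    (V : Set X) (u : X → ℝ) : Prop := ∀ x ∈ V, 0 ≤ HOp m b c p u x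

/-- `h` is non-negative on `C_c(V)`. -/
def EnergyNonneg {X : Type*} (b : X → X → ℝ) (c : X → ℝ) (p : ℝ) (V : Set X) : Prop :=
  ∀ φ : X → ℝ, MemCc V φ → 0 ≤ energy b c p φ

/-- `h` is subcritical in `V`: a Hardy inequality holds. -/
def Subcritical {X : Type*} (b : X → X → ℝ) (c : X → ℝ) (p : ℝ) (V : Set X) : Prop :=
  ∃ w : X → ℝ, (∀ x, 0 ≤ w x) ∧ w ≠ 0 ∧
    ∀ φ : X → ℝ, MemCc V φ → (∑' x, |φ x| ^ p * w x) ≤ energy b c p φ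

/-- `h` is critical in `V`. -/
def Critical {X : Type*} (b : X → X → ℝ) (c : X → ℝ) (p : ℝ) (V : Set X) : Prop :=
  EnergyNonneg b c p V ∧ ¬ Subcritical b c p V

/-- The bottom of the spectrum / variational constant `λ₀(V)`. -/
noncomputable def lam0 {X : Type*} (m : X → ℝ) (b : X → X → ℝ) (c : X → ℝ) (p : ℝ)
    (V : Set X) : ℝ :=
  sInf {r : ℝ | ∃ φ : X → ℝ, MemCc V φ ∧ φ ≠ 0 ∧
    r = energy b c p φ / ∑' x, |φ x| ^ p * m x}

/-- The variational `p`-capacity `cap_h(x, V)`. -/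
noncomputable def capH {X : Type*} (b : X → X → ℝ) (c : X → ℝ) (p : ℝ)
    (V : Set X) (x : X) : ℝ :=
  sInf {r : ℝ | ∃ φ : X → ℝ, MemCc V φ ∧ φ x = 1 ∧ r = energy b c p φ}

/-- The weighted bracket `⟨f, g⟩_V = Σ_{x ∈ V} f(x) g(x) m(x)`. -/
noncomputable def bracket {X : Type*} (m : X → ℝ) (V : Set X) (f g : X → ℝ) : ℝ :=
  ∑' x, Set.indicator V (fun x => f x * g x * m x) x

/-- `u ∈ M(V ∖ K)`: positive harmonic function of minimal growth in a neighbourhood of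
infinity in `V` (harmonic on `V∖K`, positive on `V ∪ ∂V`). -/
def MemM {X : Type*} (m : X → ℝ) (b : X → X → ℝ) (c : X → ℝ) (p : ℝ)
    (V K : Set X) (u : X → ℝ) : Prop :=
  HarmonicOn m b c p (V \ K) u ∧
  (∀ x ∈ V ∪ bdry b V, 0 ≤ u x) ∧ (∃ x ∈ V ∪ bdry b V, u x ≠ 0) ∧
  ∀ K' : Set X, K ⊆ K' → K' ⊆ V → K'.Finite → ConnectedIn b K' →
    ∀ v : X → ℝ, MemF b p (V \ K') v →
      (∀ x ∈ V \ K', 0 ≤ v x) → (∃ x ∈ V \ K', v x ≠ 0) →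
      SuperharmonicOn m b c p (V \ K') v →
      (∀ x ∈ K', u x ≤ v x) → ∀ x ∈ V \ K', u x ≤ v x

/-- `u` is a normalised Green's function in `V` at `o`. -/
def IsNormalisedGreen {X : Type*} (m : X → ℝ) (b : X → X → ℝ) (c : X → ℝ) (p : ℝ)
    (V : Set X) (o : X) (u : X → ℝ) : Prop :=
  MemM m b c p V {o} u ∧ MemF b p V u ∧ HOp m b c p u o ≠ 0 ∧
  ∀ x ∈ V, HOp m b c p u x = Set.indicator {o} (fun _ => (1:ℝ)) x


/-- `w` solves the sandwiched Poisson–Dirichlet problem of the sandwiching lemma. -/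
def SandwichSol {X : Type*} (m : X → ℝ) (b : X → X → ℝ) (c : X → ℝ) (p : ℝ)
    (K : Set X) (g f u v w : X → ℝ) : Prop :=
  (∀ x, 0 ≤ w x) ∧ (∀ x ∉ K ∪ Function.support f, w x = 0) ∧
  (∀ x ∈ K, HOp m b c p w x = g x) ∧
  (∀ x ∈ bdry b K ∪ Function.support f, w x = f x) ∧
  ∀ x ∈ K, u x ≤ w x ∧ w x ≤ v x

/-!
The solution is found by Perron's method.  The operator value `H w x` is increasing in `w x` through
the differences `w x - w y`, so if `w ≤ z` with equality at `x`, then `H z x ≤ H w x`.  Hence the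
subsolutions lying between `u` and `v` are closed under `⊔`; they form a compact set, which therefore
has a greatest element `w`.  Raising the value of `w` at a single vertex `x` keeps it a subsolution
as long as the equation at `x` is not overshot, and the intermediate value theorem produces a raise
which solves it exactly.  As `w` is the greatest subsolution, it already solves the equation at `x`.

For uniqueness, compare a solution `w` with the smallest multiple `t z` of another solution `z` that
dominates it.  They touch, and if `t > 1` the strong comparison principle makes them agree up to the
boundary with `H w = H (t z)`, which forces all the data to vanish.
-/

section RealPower

variable {p : ℝ}

theorem pPow_zero (p : ℝ) : pPow p 0 = 0 := by simp [pPow]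

theorem pPow_neg (p a : ℝ) : pPow p (-a) = -pPow p a := by
  simp [pPow, Real.sign_neg]

theorem pPow_of_nonneg {a : ℝ} (hp : p ≠ 1) (ha : 0 ≤ a) : pPow p a = a ^ (p - 1) := by
  rcases ha.eq_or_lt with rfl | ha
  · rw [pPow_zero, Real.zero_rpow (sub_ne_zero.2 hp)]
  · rw [pPow, Real.sign_of_pos ha, abs_of_pos ha, mul_one]

theorem abs_pPow (hp : p ≠ 1) (a : ℝ) : |pPow p a| = |a| ^ (p - 1) := by
  have abs_eq : |pPow p a| = pPow p |a| := by
    rcases abs_cases a with ⟨h, ha⟩ | ⟨h, ha⟩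
    · rw [h, pPow_of_nonneg hp ha, abs_of_nonneg (by positivity)]
    · rw [h, ← abs_neg, ← pPow_neg, pPow_of_nonneg hp (by linarith),
        abs_of_nonneg (Real.rpow_nonneg (by linarith) _)]
  rw [abs_eq, pPow_of_nonneg hp (abs_nonneg a)]

theorem pPow_mul_of_pos {t : ℝ} (ht : 0 < t) (a : ℝ) :
    pPow p (t * a) = t ^ (p - 1) * pPow p a := by
  have sign_mul : Real.sign (t * a) = Real.sign a := by
    rcases lt_trichotomy a 0 with ha | rfl | ha
    · rw [Real.sign_of_neg ha, Real.sign_of_neg (mul_neg_of_pos_of_neg ht ha)]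
    · rw [mul_zero]
    · rw [Real.sign_of_pos ha, Real.sign_of_pos (mul_pos ht ha)]
  rw [pPow, pPow, sign_mul, abs_mul, abs_of_pos ht, Real.mul_rpow ht.le (abs_nonneg a), mul_assoc]

theorem pPow_strictMono (hp : 1 < p) : StrictMono (pPow p) := by
  refine strictMono_of_odd_strictMonoOn_nonneg (pPow_neg p) fun a ha d hd had => ?_
  rw [pPow_of_nonneg hp.ne' ha, pPow_of_nonneg hp.ne' hd]
  exact Real.rpow_lt_rpow ha had (sub_pos.2 hp)

theorem pPow_eq_posPart_sub_negPart (hp : p ≠ 1) (a : ℝ) :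
    pPow p a = a⁺ ^ (p - 1) - a⁻ ^ (p - 1) := by
  have zero_rpow : (0 : ℝ) ^ (p - 1) = 0 := Real.zero_rpow (sub_ne_zero.2 hp)
  rcases le_total 0 a with ha | ha
  · rw [posPart_of_nonneg ha, negPart_of_nonneg ha, zero_rpow, sub_zero, pPow_of_nonneg hp ha]
  · rw [posPart_of_nonpos ha, negPart_of_nonpos ha, zero_rpow, zero_sub,
      ← pPow_of_nonneg hp (neg_nonneg.2 ha), pPow_neg, neg_neg]

theorem continuous_pPow (hp : 1 < p) : Continuous (pPow p) := by
  have hq : 0 ≤ p - 1 := (sub_pos.2 hp).le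
  rw [funext (pPow_eq_posPart_sub_negPart hp.ne')]
  exact (continuous_posPart.rpow_const fun _ => .inr hq).sub
    (continuous_negPart.rpow_const fun _ => .inr hq)

theorem abs_add_rpow_le {q : ℝ} (hq : 0 ≤ q) (a d : ℝ) :
    |a + d| ^ q ≤ 2 ^ q * (|a| ^ q + |d| ^ q) := by
  wlog had : |d| ≤ |a| generalizing a d
  · rw [add_comm a d, add_comm (|a| ^ q)]
    exact this d a (le_of_not_ge had)
  calc |a + d| ^ q ≤ (2 * |a|) ^ q := by
        gcongr
        linarith [abs_add_le a d]
    _ = 2 ^ q * |a| ^ q := Real.mul_rpow zero_le_two (abs_nonneg a)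
    _ ≤ 2 ^ q * (|a| ^ q + |d| ^ q) := by
        gcongr
        exact le_add_of_nonneg_right (by positivity)

end RealPower

theorem exists_isGreatest_of_isCompact_of_directedOn {α : Type*} [TopologicalSpace α] [Preorder α]
    [ClosedIciTopology α] {s : Set α} (hs : IsCompact s) (hne : s.Nonempty)
    (hdir : DirectedOn (· ≤ ·) s) : ∃ a, IsGreatest s a := by
  have finite_bound (t : Finset s) : (s ∩ ⋂ i ∈ t, Set.Ici (i : α)).Nonempty := by
    have := hne.to_subtype
    have := hdir.isDirectedOrder
    obtain ⟨a, ha⟩ := t.exists_le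
    exact ⟨a, a.2, Set.mem_iInter₂.2 ha⟩
  obtain ⟨a, has, ha⟩ := hs.inter_iInter_nonempty _ (fun i : s => isClosed_Ici) finite_bound
  exact ⟨a, has, fun z hz => Set.mem_iInter.1 ha ⟨z, hz⟩⟩

section FormalSpace

variable {X : Type*} {b : X → X → ℝ} {p : ℝ} {V : Set X} {f g : X → ℝ}

theorem memF_const (hdeg : ∀ x, Summable (b x)) (a : ℝ) : MemF b p V fun _ => a :=
  fun x _ => (hdeg x).mul_right _

theorem MemF.of_abs_le (hb : ∀ x y, 0 ≤ b x y) (hp : 1 ≤ p) (hf : MemF b p V f)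
    (hgf : ∀ y, |g y| ≤ |f y|) : MemF b p V g := fun x hx =>
  (hf x hx).of_nonneg_of_le (fun y => mul_nonneg (hb x y) (by positivity)) fun y =>
    mul_le_mul_of_nonneg_left
      (Real.rpow_le_rpow (abs_nonneg _) (hgf y) (sub_nonneg.2 hp)) (hb x y)

theorem MemF.abs (hf : MemF b p V f) : MemF b p V |f| := by
  simpa only [MemF, Pi.abs_apply, abs_abs] using hf

theorem MemF.const_smul (hf : MemF b p V f) (t : ℝ) : MemF b p V (t • f) := by
  intro x hx
  simpa only [Pi.smul_apply, smul_eq_mul, abs_mul, Real.mul_rpow (abs_nonneg _) (abs_nonneg _),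
    mul_left_comm] using (hf x hx).mul_left (|t| ^ (p - 1))

theorem MemF.add (hb : ∀ x y, 0 ≤ b x y) (hp : 1 ≤ p) (hf : MemF b p V f) (hg : MemF b p V g) :
    MemF b p V (f + g) := fun x hx =>
  (((hf x hx).add (hg x hx)).mul_left (2 ^ (p - 1))).of_nonneg_of_le
    (fun y => mul_nonneg (hb x y) (by positivity)) fun y =>
      calc b x y * |f y + g y| ^ (p - 1)
          ≤ b x y * (2 ^ (p - 1) * (|f y| ^ (p - 1) + |g y| ^ (p - 1))) :=
            mul_le_mul_of_nonneg_left (abs_add_rpow_le (sub_nonneg.2 hp) _ _) (hb x y)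
        _ = 2 ^ (p - 1) * (b x y * |f y| ^ (p - 1) + b x y * |g y| ^ (p - 1)) := by ring

theorem MemF.sub (hb : ∀ x y, 0 ≤ b x y) (hp : 1 ≤ p) (hf : MemF b p V f) (hg : MemF b p V g) :
    MemF b p V (f - g) := by
  simpa only [neg_one_smul, ← sub_eq_add_neg] using hf.add hb hp (hg.const_smul (-1))

theorem MemCc.memF (hf : MemCc V f) (hp : p ≠ 1) {W : Set X} : MemF b p W f := fun x _ =>
  summable_of_hasFiniteSupport <| hf.1.subset fun y hy hfy => hy <| by
    simp [hfy, Real.zero_rpow (sub_ne_zero.2 hp)]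

theorem MemF.summable_mul_pPow (hb : ∀ x y, 0 ≤ b x y) (hdeg : ∀ x, Summable (b x)) (hp : 1 < p)
    (hf : MemF b p V f) {x : X} (hx : x ∈ V) :
    Summable fun y => b x y * pPow p (f x - f y) := by
  have summable_rpow : Summable fun y => b x y * |f x - f y| ^ (p - 1) :=
    (memF_const hdeg (f x)).sub hb hp.le hf x hx
  refine Summable.of_abs ?_
  simpa only [abs_mul, abs_of_nonneg (hb _ _), abs_pPow hp.ne'] using summable_rpow

end FormalSpace

section Comparison

variable {X : Type*} {m : X → ℝ} {b : X → X → ℝ} {c : X → ℝ} {p : ℝ} {V : Set X} {w z : X → ℝ}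

theorem HOp_zero (x : X) : HOp m b c p 0 x = 0 := by simp [HOp, pPow_zero]

theorem HOp_smul_of_pos {t : ℝ} (ht : 0 < t) (w : X → ℝ) (x : X) :
    HOp m b c p (t • w) x = t ^ (p - 1) * HOp m b c p w x := by
  simp only [HOp, Pi.smul_apply, smul_eq_mul, ← mul_sub, pPow_mul_of_pos ht,
    mul_left_comm _ (t ^ (p - 1)), tsum_mul_left]
  ring

theorem continuousOn_HOp (hG : IsGraph m b) (hp : 1 < p) {M : X → ℝ} (hM : MemF b p V M) {x : X}
    (hx : x ∈ V) : ContinuousOn (fun w => HOp m b c p w x) {w | ∀ y, |w y| ≤ M y} := by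
  obtain ⟨-, hb, -, -, hdeg⟩ := hG
  have hcont := continuous_pPow hp
  have hbound : Summable fun y => b x y * |M x + M y| ^ (p - 1) :=
    (memF_const hdeg (M x)).add hb hp.le hM x hx
  refine (continuousOn_const.mul (continuousOn_tsum (fun y => ?_) hbound fun y w hw => ?_)).add ?_
  · exact Continuous.continuousOn (by fun_prop)
  · rw [Real.norm_eq_abs, abs_mul, abs_of_nonneg (hb x y), abs_pPow hp.ne']
    have hxy : |w x - w y| ≤ |M x + M y| :=
      (abs_sub _ _).trans ((add_le_add (hw x) (hw y)).trans (le_abs_self _))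
    exact mul_le_mul_of_nonneg_left
      (Real.rpow_le_rpow (abs_nonneg _) hxy (sub_pos.2 hp).le) (hb x y)
  · exact Continuous.continuousOn (by fun_prop)

theorem mul_pPow_sub_le_of_touching (hb : ∀ x y, 0 ≤ b x y) (hp : 1 < p) {x y : X}
    (heq : w x = z x) (hle : 0 < b x y → w y ≤ z y) :
    b x y * pPow p (z x - z y) ≤ b x y * pPow p (w x - w y) := by
  rcases (hb x y).eq_or_lt with hxy | hxy
  · simp [← hxy]
  · exact mul_le_mul_of_nonneg_left
      ((pPow_strictMono hp).monotone (by linarith [hle hxy])) hxy.le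

theorem HOp_le_HOp_of_touching (hG : IsGraph m b) (hp : 1 < p) (hw : MemF b p V w)
    (hz : MemF b p V z) {x : X} (hx : x ∈ V) (heq : w x = z x)
    (hle : ∀ y, 0 < b x y → w y ≤ z y) : HOp m b c p z x ≤ HOp m b c p w x := by
  obtain ⟨hm, hb, -, -, hdeg⟩ := hG
  have tsum_le := (hz.summable_mul_pPow hb hdeg hp hx).tsum_le_tsum
    (fun y => mul_pPow_sub_le_of_touching hb hp heq (hle y)) (hw.summable_mul_pPow hb hdeg hp hx)
  rw [heq] at tsum_le
  rw [HOp, HOp, heq]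
  exact add_le_add_left (mul_le_mul_of_nonneg_left tsum_le (one_div_pos.2 (hm x)).le) _

theorem HOp_lt_HOp_of_touching (hG : IsGraph m b) (hp : 1 < p) (hw : MemF b p V w)
    (hz : MemF b p V z) {x : X} (hx : x ∈ V) (heq : w x = z x)
    (hle : ∀ y, 0 < b x y → w y ≤ z y) {y : X} (hxy : 0 < b x y) (hlt : w y < z y) :
    HOp m b c p z x < HOp m b c p w x := by
  obtain ⟨hm, hb, -, -, hdeg⟩ := hG
  have term_lt : b x y * pPow p (z x - z y) < b x y * pPow p (w x - w y) :=
    mul_lt_mul_of_pos_left (pPow_strictMono hp (by linarith)) hxy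
  have tsum_lt := Summable.tsum_lt_tsum
    (fun y => mul_pPow_sub_le_of_touching hb hp heq (hle y)) term_lt
    (hz.summable_mul_pPow hb hdeg hp hx) (hw.summable_mul_pPow hb hdeg hp hx)
  rw [heq] at tsum_lt
  rw [HOp, HOp, heq]
  exact add_lt_add_left (mul_lt_mul_of_pos_left tsum_lt (one_div_pos.2 (hm x))) _

theorem IsGraph.mem_union_bdry (hG : IsGraph m b) {x y : X} (hx : x ∈ V) (hxy : 0 < b x y) :
    y ∈ V ∪ bdry b V :=
  or_iff_not_imp_left.2 fun hy => ⟨hy, x, hx, hG.2.2.1 x y ▸ hxy⟩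

theorem strong_comparison_principle (hG : IsGraph m b) (hp : 1 < p) (hconn : ConnectedIn b V)
    (hw : MemF b p V w) (hz : MemF b p V z) (hle : ∀ y ∈ V ∪ bdry b V, w y ≤ z y)
    (hH : ∀ y ∈ V, HOp m b c p w y ≤ HOp m b c p z y) {x : X} (hx : x ∈ V) (heq : w x = z x) :
    Set.EqOn w z (V ∪ bdry b V) ∧ Set.EqOn (HOp m b c p w) (HOp m b c p z) V := by
  have hle_nbr {y : X} (hy : y ∈ V) (y' : X) (hyy' : 0 < b y y') : w y' ≤ z y' :=
    hle y' (hG.mem_union_bdry hy hyy')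
  have eq_nbr {y y' : X} (hy : y ∈ V) (heq : w y = z y) (hyy' : 0 < b y y') : w y' = z y' := by
    by_contra hne
    exact (HOp_lt_HOp_of_touching hG hp hw hz hy heq (hle_nbr hy) hyy'
      (lt_of_le_of_ne (hle_nbr hy y' hyy') hne)).not_ge (hH y hy)
  have eq_inside : Set.EqOn w z V := fun y hy => by
    have path := hconn x hx y hy
    clear hy
    induction path with
    | refl => exact heq
    | tail _ edge ih => exact eq_nbr edge.1 ih edge.2.2
  refine ⟨?_, fun y hy => (hH y hy).antisymm ?_⟩
  · rintro y (hy | ⟨-, y', hy', hyy'⟩)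
    · exact eq_inside hy
    · exact eq_nbr hy' (eq_inside hy') (hG.2.2.1 y y' ▸ hyy')
  · exact HOp_le_HOp_of_touching hG hp hw hz hy (eq_inside hy) (hle_nbr hy)

theorem SuperharmonicOn.pos (hsuper : SuperharmonicOn m b c p V z) (hG : IsGraph m b) (hp : 1 < p)
    (hconn : ConnectedIn b V) (hz : MemF b p V z) (hz0 : ∀ y ∈ V ∪ bdry b V, 0 ≤ z y)
    (hne : ¬(HarmonicOn m b c p V z ∧ ∀ y ∈ bdry b V, z y = 0)) {x : X} (hx : x ∈ V) :
    0 < z x := by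
  refine (hz0 x (.inl hx)).lt_of_ne fun hzx => hne ?_
  obtain ⟨zero_eq, HOp_zero_eq⟩ := strong_comparison_principle (w := 0) (c := c) hG hp hconn
    (memF_const hG.2.2.2.2 0) hz hz0 (fun y hy => (HOp_zero y).trans_le (hsuper y hy)) hx hzx
  exact ⟨fun y hy => (HOp_zero_eq hy).symm.trans (HOp_zero y), fun y hy => (zero_eq (.inr hy)).symm⟩

theorem comparison_principle (hG : IsGraph m b) (hp : 1 < p) (hV : V.Finite)
    (hconn : ConnectedIn b V) (hw : MemF b p V w) (hz : MemF b p V z)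
    (hz0 : ∀ y ∈ V ∪ bdry b V, 0 ≤ z y) (hsuper : SuperharmonicOn m b c p V z)
    (hne : ¬(HarmonicOn m b c p V z ∧ ∀ y ∈ bdry b V, z y = 0))
    (hbd : ∀ y ∈ bdry b V, w y ≤ z y) (hH : ∀ y ∈ V, HOp m b c p w y ≤ HOp m b c p z y) :
    ∀ x ∈ V, w x ≤ z x := by
  have z_pos {x : X} (hx : x ∈ V) : 0 < z x := hsuper.pos hG hp hconn hz hz0 hne hx
  by_contra! ⟨x₀, hx₀, hlt⟩
  obtain ⟨x, hx, hmax⟩ := Set.exists_max_image V (fun y => w y / z y) hV ⟨x₀, hx₀⟩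
  set t := w x / z x
  have one_lt_t : 1 < t := ((one_lt_div (z_pos hx₀)).2 hlt).trans_le (hmax x₀ hx₀)
  have t_pos : 0 < t := one_pos.trans one_lt_t
  have one_lt_rpow : 1 < t ^ (p - 1) := Real.one_lt_rpow one_lt_t (sub_pos.2 hp)
  have w_le : ∀ y ∈ V ∪ bdry b V, w y ≤ (t • z) y := by
    rintro y (hy | hy)
    · exact (div_le_iff₀ (z_pos hy)).1 (hmax y hy)
    · exact (hbd y hy).trans (le_mul_of_one_le_left (hz0 y (.inr hy)) one_lt_t.le)
  have HOp_w_le : ∀ y ∈ V, HOp m b c p w y ≤ HOp m b c p (t • z) y := fun y hy =>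
    (hH y hy).trans (HOp_smul_of_pos t_pos z y ▸
      le_mul_of_one_le_left (hsuper y hy) one_lt_rpow.le)
  obtain ⟨w_eq, HOp_w_eq⟩ := strong_comparison_principle hG hp hconn hw (hz.const_smul t) w_le
    HOp_w_le hx (div_mul_cancel₀ _ (z_pos hx).ne').symm
  refine hne ⟨fun y hy => ?_, fun y hy => ?_⟩
  · have := (HOp_w_eq hy).trans (HOp_smul_of_pos t_pos z y)
    have hsuper_y := hsuper y hy
    nlinarith [hH y hy]
  · have : w y = t * z y := w_eq (.inr hy)
    nlinarith [hbd y hy, hz0 y (.inr hy)]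

end Comparison

section Perron

variable {X : Type*} {m : X → ℝ} {b : X → X → ℝ} {c : X → ℝ} {p : ℝ} {K V : Set X}
  {g f u v w : X → ℝ}

/-- The order box of the sandwiching lemma: the functions with boundary values `f` (prescribed on
all of the complement of `K`) which lie between the barriers `u` and `v` on `K`. -/
def sandwichBox (K : Set X) (f u v : X → ℝ) : Set (X → ℝ) :=
  {w | (∀ x ∈ K, u x ≤ w x ∧ w x ≤ v x) ∧ Set.EqOn w f Kᶜ}

/-- Perron's family: the subsolutions of `H w = g` on `K` in the order box, whose greatest element
is the solution. -/
def perronFamily (m : X → ℝ) (b : X → X → ℝ) (c : X → ℝ) (p : ℝ) (K : Set X)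
    (g f u v : X → ℝ) : Set (X → ℝ) :=
  {w ∈ sandwichBox K f u v | ∀ x ∈ K, HOp m b c p w x ≤ g x}

theorem isCompact_sandwichBox (K : Set X) (f u v : X → ℝ) : IsCompact (sandwichBox K f u v) := by
  classical
  have eq_Icc : sandwichBox K f u v = Set.Icc (K.piecewise u f) (K.piecewise v f) := by
    ext w
    refine ⟨fun hw => ⟨?_, ?_⟩, fun hw => ⟨fun x hx => ?_, fun x hx => ?_⟩⟩
    · exact Set.piecewise_le (fun x hx => (hw.1 x hx).1) fun x hx => (hw.2 hx).ge
    · exact Set.le_piecewise (fun x hx => (hw.1 x hx).2) fun x hx => (hw.2 hx).le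
    · exact ⟨(K.piecewise_eq_of_mem u f hx).ge.trans (hw.1 x),
        (hw.2 x).trans_eq (K.piecewise_eq_of_mem v f hx)⟩
    · exact ((hw.2 x).trans_eq (K.piecewise_eq_of_notMem v f hx)).antisymm
        ((K.piecewise_eq_of_notMem u f hx).ge.trans (hw.1 x))
  exact eq_Icc ▸ isCompact_Icc

theorem exists_memF_bound_sandwichBox (hb : ∀ x y, 0 ≤ b x y) (hp : 1 ≤ p) (hu : MemF b p V u)
    (hv : MemF b p V v) (hf : MemF b p V f) :
    ∃ M, MemF b p V M ∧ sandwichBox K f u v ⊆ {w | ∀ y, |w y| ≤ M y} := by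
  refine ⟨|u| + |v| + |f|, (hu.abs.add hb hp hv.abs).add hb hp hf.abs, fun w hw y => ?_⟩
  simp only [Pi.add_apply, Pi.abs_apply]
  by_cases hy : y ∈ K
  · obtain ⟨huw, hwv⟩ := hw.1 y hy
    have := abs_le_max_abs_abs huw hwv
    have := max_le_add_of_nonneg (abs_nonneg (u y)) (abs_nonneg (v y))
    linarith [abs_nonneg (f y)]
  · rw [hw.2 hy]
    exact le_add_of_nonneg_left (by positivity)

theorem memF_of_mem_sandwichBox (hb : ∀ x y, 0 ≤ b x y) (hp : 1 ≤ p) (hu : MemF b p V u)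
    (hv : MemF b p V v) (hf : MemF b p V f) (hw : w ∈ sandwichBox K f u v) : MemF b p V w := by
  obtain ⟨M, hM, hbound⟩ := exists_memF_bound_sandwichBox hb hp hu hv hf
  exact hM.of_abs_le hb hp fun y => (hbound hw y).trans (le_abs_self _)

theorem continuousOn_HOp_sandwichBox (hG : IsGraph m b) (hp : 1 < p) (hu : MemF b p K u)
    (hv : MemF b p K v) (hf : MemF b p K f) {x : X} (hx : x ∈ K) :
    ContinuousOn (fun w => HOp m b c p w x) (sandwichBox K f u v) := by
  obtain ⟨M, hM, hbound⟩ := exists_memF_bound_sandwichBox hG.2.1 hp.le hu hv hf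
  exact (continuousOn_HOp hG hp hM hx).mono hbound

theorem isCompact_perronFamily (hG : IsGraph m b) (hp : 1 < p) (hu : MemF b p K u)
    (hv : MemF b p K v) (hf : MemF b p K f) : IsCompact (perronFamily m b c p K g f u v) := by
  have hbox := isCompact_sandwichBox K f u v
  have hcont : ContinuousOn (fun w (x : K) => HOp m b c p w x) (sandwichBox K f u v) :=
    continuousOn_pi.2 fun x => continuousOn_HOp_sandwichBox hG hp hu hv hf x.2
  have hclosed := hcont.preimage_isClosed_of_isClosed hbox.isClosed
    (isClosed_Iic (a := fun x : K => g x))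
  refine hbox.of_isClosed_subset (t := perronFamily m b c p K g f u v) ?_ fun w hw => hw.1
  convert hclosed using 1
  ext w
  simp [perronFamily, Pi.le_def]

theorem perronFamily_nonempty (hG : IsGraph m b) (hp : 1 < p) (hu : MemF b p K u)
    (hv : MemF b p K v) (hf : MemF b p K f) (huv : ∀ x ∈ K, u x ≤ v x)
    (huf : ∀ x ∈ bdry b K, u x ≤ f x) (hHu : ∀ x ∈ K, HOp m b c p u x ≤ g x) :
    (perronFamily m b c p K g f u v).Nonempty := by
  classical
  have hbox : K.piecewise u f ∈ sandwichBox K f u v :=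
    ⟨fun x hx => by simp [hx, huv x hx], K.piecewise_eqOn_compl u f⟩
  refine ⟨K.piecewise u f, hbox, fun x hx => le_trans ?_ (hHu x hx)⟩
  refine HOp_le_HOp_of_touching hG hp hu (memF_of_mem_sandwichBox hG.2.1 hp.le hu hv hf hbox) hx
    (K.piecewise_eq_of_mem u f hx).symm fun y hxy => ?_
  rcases hG.mem_union_bdry hx hxy with hy | hy
  · exact (K.piecewise_eq_of_mem u f hy).ge
  · exact (huf y hy).trans_eq (K.piecewise_eq_of_notMem u f hy.1).symm

theorem supClosed_perronFamily (hG : IsGraph m b) (hp : 1 < p) (hu : MemF b p K u)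
    (hv : MemF b p K v) (hf : MemF b p K f) : SupClosed (perronFamily m b c p K g f u v) := by
  rintro w ⟨hw, hHw⟩ z ⟨hz, hHz⟩
  have hbox : w ⊔ z ∈ sandwichBox K f u v :=
    ⟨fun x hx => ⟨(hw.1 x hx).1.trans le_sup_left, sup_le (hw.1 x hx).2 (hz.1 x hx).2⟩,
      fun x hx => by rw [Pi.sup_apply, hw.2 hx, hz.2 hx, sup_idem]⟩
  have hF {w' : X → ℝ} (hw' : w' ∈ sandwichBox K f u v) : MemF b p K w' :=
    memF_of_mem_sandwichBox hG.2.1 hp.le hu hv hf hw'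
  refine ⟨hbox, fun x hx => ?_⟩
  rcases le_total (z x) (w x) with hzw | hwz
  · exact (HOp_le_HOp_of_touching hG hp (hF hw) (hF hbox) hx (sup_eq_left.2 hzw).symm
      fun y _ => le_sup_left).trans (hHw x hx)
  · exact (HOp_le_HOp_of_touching hG hp (hF hz) (hF hbox) hx (sup_eq_right.2 hwz).symm
      fun y _ => le_sup_right).trans (hHz x hx)

theorem exists_isGreatest_perronFamily (hG : IsGraph m b) (hp : 1 < p) (hu : MemF b p K u)
    (hv : MemF b p K v) (hf : MemF b p K f) (huv : ∀ x ∈ K, u x ≤ v x)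
    (huf : ∀ x ∈ bdry b K, u x ≤ f x) (hHu : ∀ x ∈ K, HOp m b c p u x ≤ g x) :
    ∃ w, IsGreatest (perronFamily m b c p K g f u v) w :=
  exists_isGreatest_of_isCompact_of_directedOn (isCompact_perronFamily hG hp hu hv hf)
    (perronFamily_nonempty hG hp hu hv hf huv huf hHu)
    (supClosed_perronFamily hG hp hu hv hf).directedOn

theorem update_mem_sandwichBox [DecidableEq X] (hw : w ∈ sandwichBox K f u v) {x : X}
    (hx : x ∈ K) {s : ℝ} (hs : s ∈ Set.Icc (w x) (v x)) :
    Function.update w x s ∈ sandwichBox K f u v := by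
  refine ⟨fun y hy => ?_, fun y hy => ?_⟩
  · rcases eq_or_ne y x with rfl | hyx
    · simpa only [Function.update_self] using ⟨(hw.1 y hy).1.trans hs.1, hs.2⟩
    · simpa only [Function.update_of_ne hyx] using hw.1 y hy
  · rw [Function.update_of_ne (ne_of_mem_of_not_mem hx hy).symm, hw.2 hy]

theorem update_mem_perronFamily [DecidableEq X] (hG : IsGraph m b) (hp : 1 < p)
    (hu : MemF b p K u) (hv : MemF b p K v) (hf : MemF b p K f)
    (hw : w ∈ perronFamily m b c p K g f u v) {x : X} (hx : x ∈ K) {s : ℝ}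
    (hs : s ∈ Set.Icc (w x) (v x)) (hHs : HOp m b c p (Function.update w x s) x ≤ g x) :
    Function.update w x s ∈ perronFamily m b c p K g f u v := by
  have hbox := update_mem_sandwichBox hw.1 hx hs
  refine ⟨hbox, fun y hy => ?_⟩
  rcases eq_or_ne y x with rfl | hyx
  · exact hHs
  · exact (HOp_le_HOp_of_touching hG hp (memF_of_mem_sandwichBox hG.2.1 hp.le hu hv hf hw.1)
      (memF_of_mem_sandwichBox hG.2.1 hp.le hu hv hf hbox) hy (Function.update_of_ne hyx s w).symm
      fun y' _ => le_update_self_iff.2 hs.1 y').trans (hw.2 y hy)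

theorem HOp_eq_of_isGreatest_perronFamily (hG : IsGraph m b) (hp : 1 < p) (hu : MemF b p K u)
    (hv : MemF b p K v) (hf : MemF b p K f) (hfv : ∀ x ∈ bdry b K, f x ≤ v x)
    (hHv : ∀ x ∈ K, g x ≤ HOp m b c p v x)
    (hw : IsGreatest (perronFamily m b c p K g f u v) w) : Set.EqOn (HOp m b c p w) g K := by
  classical
  intro x hx
  have hwv : w x ≤ v x := (hw.1.1.1 x hx).2
  have hupdate : Continuous fun s : ℝ => Function.update w x s :=
    (continuous_const (y := w)).update x continuous_id
  have hcont : ContinuousOn (fun s => HOp m b c p (Function.update w x s) x)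
      (Set.Icc (w x) (v x)) :=
    (continuousOn_HOp_sandwichBox hG hp hu hv hf hx).comp hupdate.continuousOn
      fun s hs => update_mem_sandwichBox hw.1.1 hx hs
  have g_le_top : g x ≤ HOp m b c p (Function.update w x (v x)) x := by
    have hbox := update_mem_sandwichBox hw.1.1 hx (Set.right_mem_Icc.2 hwv)
    refine (hHv x hx).trans (HOp_le_HOp_of_touching hG hp
      (memF_of_mem_sandwichBox hG.2.1 hp.le hu hv hf hbox) hv hx (Function.update_self x _ w)
      fun y hxy => ?_)
    rcases hG.mem_union_bdry hx hxy with hy | hy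
    · exact (hbox.1 y hy).2
    · exact (hbox.2 hy.1).trans_le (hfv y hy)
  obtain ⟨s, hs, hHs⟩ := intermediate_value_Icc hwv hcont
    ⟨by simpa only [Function.update_eq_self] using hw.1.2 x hx, g_le_top⟩
  have update_le := hw.2 (update_mem_perronFamily hG hp hu hv hf hw.1 hx hs hHs.le)
  have s_eq : s = w x := (update_le_self_iff.1 update_le).antisymm hs.1
  simpa only [s_eq, Function.update_eq_self] using hHs

theorem exists_mem_sandwichBox_HOp_eq (hG : IsGraph m b) (hp : 1 < p) (hu : MemF b p K u)
    (hv : MemF b p K v) (hf : MemF b p K f) (huv : ∀ x ∈ K, u x ≤ v x)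
    (hbd : ∀ x ∈ bdry b K, u x ≤ f x ∧ f x ≤ v x) (hHu : ∀ x ∈ K, HOp m b c p u x ≤ g x)
    (hHv : ∀ x ∈ K, g x ≤ HOp m b c p v x) :
    ∃ w ∈ sandwichBox K f u v, Set.EqOn (HOp m b c p w) g K := by
  obtain ⟨w, hw⟩ := exists_isGreatest_perronFamily hG hp hu hv hf huv
    (fun x hx => (hbd x hx).1) hHu
  exact ⟨w, hw.1.1, HOp_eq_of_isGreatest_perronFamily hG hp hu hv hf
    (fun x hx => (hbd x hx).2) hHv hw⟩

end Perron

section Sandwich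

variable {X : Type*} {m : X → ℝ} {b : X → X → ℝ} {c : X → ℝ} {p : ℝ} {K : Set X}
  {g f u v w w₁ w₂ : X → ℝ}

theorem sandwichSol_iff (hfK : MemC Kᶜ f) (hf0 : ∀ x, 0 ≤ f x) (hu0 : ∀ x ∈ K, 0 ≤ u x) :
    SandwichSol m b c p K g f u v w ↔
      w ∈ sandwichBox K f u v ∧ Set.EqOn (HOp m b c p w) g K := by
  constructor
  · rintro ⟨-, hw_off, hHw, hwf, hwK⟩
    refine ⟨⟨hwK, fun x hx => ?_⟩, hHw⟩
    by_cases hfx : x ∈ Function.support f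
    · exact hwf x (.inr hfx)
    · rw [hw_off x (not_or.2 ⟨hx, hfx⟩), Function.notMem_support.1 hfx]
  · rintro ⟨⟨hwK, hwf⟩, hHw⟩
    refine ⟨fun x => ?_, fun x hx => ?_, hHw, fun x hx => hwf ?_, hwK⟩
    · by_cases hx : x ∈ K
      · exact (hu0 x hx).trans (hwK x hx).1
      · exact (hf0 x).trans_eq (hwf hx).symm
    · obtain ⟨hxK, hfx⟩ := not_or.1 hx
      exact (hwf hxK).trans (Function.notMem_support.1 hfx)
    · rcases hx with hx | hfx
      · exact hx.1
      · exact fun hxK => hfx (hfK x (Set.notMem_compl_iff.2 hxK))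

theorem le_of_HOp_eqOn (hG : IsGraph m b) (hp : 1 < p) (hK : K.Finite) (hconn : ConnectedIn b K)
    (hg0 : ∀ x ∈ K, 0 ≤ g x) (hgf : (∃ x ∈ K, g x ≠ 0) ∨ ∃ x ∈ bdry b K, f x ≠ 0)
    (hF₁ : MemF b p K w₁) (hF₂ : MemF b p K w₂) (hw₂ : ∀ x, 0 ≤ w₂ x)
    (hH₁ : Set.EqOn (HOp m b c p w₁) g K) (hH₂ : Set.EqOn (HOp m b c p w₂) g K)
    (hf₁ : Set.EqOn w₁ f Kᶜ) (hf₂ : Set.EqOn w₂ f Kᶜ) : w₁ ≤ w₂ := by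
  have nontrivial_data : ¬(HarmonicOn m b c p K w₂ ∧ ∀ y ∈ bdry b K, w₂ y = 0) := by
    rintro ⟨hharm, hzero⟩
    rcases hgf with ⟨x, hx, hgx⟩ | ⟨x, hx, hfx⟩
    · exact hgx ((hH₂ hx).symm.trans (hharm x hx))
    · exact hfx ((hf₂ hx.1).symm.trans (hzero x hx))
  have le_inside := comparison_principle hG hp hK hconn hF₁ hF₂ (fun y _ => hw₂ y)
    (fun y hy => (hg0 y hy).trans_eq (hH₂ hy).symm) nontrivial_data
    (fun y hy => ((hf₁ hy.1).trans (hf₂ hy.1).symm).le)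
    (fun y hy => ((hH₁ hy).trans (hH₂ hy).symm).le)
  intro x
  by_cases hx : x ∈ K
  · exact le_inside x hx
  · exact ((hf₁ hx).trans (hf₂ hx).symm).le

theorem stmt14_general (hG : IsGraph m b) (hp : 1 < p) (hg0 : ∀ x ∈ K, 0 ≤ g x)
    (hfK : MemC Kᶜ f) (hfF : MemF b p K f) (hf0 : ∀ x, 0 ≤ f x)
    (huF : MemF b p K u) (hvF : MemF b p K v)
    (hHu : ∀ x ∈ K, HOp m b c p u x ≤ g x) (hHv : ∀ x ∈ K, g x ≤ HOp m b c p v x)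
    (hbd : ∀ x ∈ bdry b K, u x ≤ f x ∧ f x ≤ v x) (huv : ∀ x ∈ K, 0 ≤ u x ∧ u x ≤ v x) :
    (∃ w, SandwichSol m b c p K g f u v w) ∧
    (K.Finite → ConnectedIn b K → ((∃ x ∈ K, g x ≠ 0) ∨ ∃ x ∈ bdry b K, f x ≠ 0) →
      ∀ w₁ w₂, SandwichSol m b c p K g f u v w₁ → SandwichSol m b c p K g f u v w₂ → w₁ = w₂) := by
  have sol_iff (w : X → ℝ) : SandwichSol m b c p K g f u v w ↔
      w ∈ sandwichBox K f u v ∧ Set.EqOn (HOp m b c p w) g K :=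
    sandwichSol_iff hfK hf0 fun x hx => (huv x hx).1
  refine ⟨?_, fun hK hconn hgf w₁ w₂ hw₁ hw₂ => ?_⟩
  · obtain ⟨w, hw⟩ := exists_mem_sandwichBox_HOp_eq hG hp huF hvF hfF
      (fun x hx => (huv x hx).2) hbd hHu hHv
    exact ⟨w, (sol_iff w).2 hw⟩
  · have sol_le {w z : X → ℝ} (hw : SandwichSol m b c p K g f u v w)
        (hz : SandwichSol m b c p K g f u v z) : w ≤ z := by
      obtain ⟨hw_box, hHw⟩ := (sol_iff w).1 hw
      obtain ⟨hz_box, hHz⟩ := (sol_iff z).1 hz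
      exact le_of_HOp_eqOn hG hp hK hconn hg0 hgf
        (memF_of_mem_sandwichBox hG.2.1 hp.le huF hvF hfF hw_box)
        (memF_of_mem_sandwichBox hG.2.1 hp.le huF hvF hfF hz_box) hz.1 hHw hHz hw_box.2 hz_box.2
    exact (sol_le hw₁ hw₂).antisymm (sol_le hw₂ hw₁)

end Sandwich

theorem stmt14 {X : Type*} [Countable X] [Infinite X]
    (m : X → ℝ) (b : X → X → ℝ) (c : X → ℝ) (p : ℝ)
    (hG : IsGraph m b) (hgconn : ConnectedIn b Set.univ) (hp : 1 < p)
    (K : Set X) (hK : K.Finite) (g f : X → ℝ)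
    (hgC : MemC K g) (hgnn : ∀ x, 0 ≤ g x)
    (hfC : MemCc Kᶜ f) (hfnn : ∀ x, 0 ≤ f x)
    (hlam : 0 < lam0 m b c p (Function.support f ∪ K))
    (u v : X → ℝ) (huF : MemF b p K u) (hvF : MemF b p K v)
    (hHu : ∀ x ∈ K, HOp m b c p u x ≤ g x)
    (hHv : ∀ x ∈ K, g x ≤ HOp m b c p v x)
    (hbdu : ∀ x ∈ bdry b K ∪ Function.support f, u x ≤ f x ∧ f x ≤ v x)
    (huv : ∀ x ∈ K, 0 ≤ u x ∧ u x ≤ v x) :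
    (∃ w : X → ℝ, SandwichSol m b c p K g f u v w) ∧
    (ConnectedIn b K →
      ((∃ x ∈ K, g x ≠ 0) ∨
        ∃ x₀, Function.support f ∩ bdry b K = {x₀} ∧ 0 < f x₀) →
      ∀ w₁ w₂ : X → ℝ, SandwichSol m b c p K g f u v w₁ →
        SandwichSol m b c p K g f u v w₂ → w₁ = w₂) := by
  obtain ⟨hex, huniq⟩ := stmt14_general hG hp (fun x _ => hgnn x) hfC.2 (hfC.memF hp.ne') hfnn
    huF hvF hHu hHv (fun x hx => hbdu x (.inl hx)) huv
  refine ⟨hex, fun hconn hdata => huniq hK hconn (hdata.imp_right ?_)⟩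
  rintro ⟨x₀, hx₀, hfx₀⟩
  exact ⟨x₀, (hx₀.ge rfl).2, hfx₀.ne'⟩
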